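/- Let G be a word hyperbolic group generated by a finite set 𝒢 closed under inversion, and let C₁ and C₂ be virtually cyclic subgroups of G whose intersection C₁ ∩ C₂ is finite. Then there is a constant K₃ > 0 such that for any c₁ ∈ C₁, if u is a shortest (with respect to l_𝒢) element in the coset c₁C₂, then l_𝒢(u) ≥ l_𝒢(c₁)/K₃ − K₃. -/

import Mathlib

universe u v w

section Defs

variable {G : Type u} [Group G]

/-- A finite generating set closed under inversion. -/
def IsSymmGen (X : Set G) : Prop :=
  X.Finite ∧ (∀ x ∈ X, x⁻¹ ∈ X) ∧ Subgroup.closure X = ⊤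

/-- Word length of `g` with respect to `X`. -/
noncomputable def wordLength (X : Set G) (g : G) : ℕ :=
  sInf {n : ℕ | ∃ l : List G, l.length = n ∧ (∀ x ∈ l, x ∈ X) ∧ l.prod = g}

/-- Word metric. -/
noncomputable def wordDist (X : Set G) (g h : G) : ℕ :=
  wordLength X (g⁻¹ * h)

/-- Gromov product with respect to the word metric. -/
noncomputable def gromovProd (X : Set G) (x y w : G) : ℝ :=
  ((wordDist X x w : ℝ) + (wordDist X y w : ℝ) - (wordDist X x y : ℝ)) / 2

end Defs

/-- A group is word hyperbolic if for some finite symmetric generating set the Gromov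
product satisfies the hyperbolicity inequality. -/
def IsWordHyperbolic (G : Type u) [Group G] : Prop :=
  ∃ X : Set G, IsSymmGen X ∧ ∃ δ : ℝ, 0 ≤ δ ∧
    ∀ x y z w : G,
      gromovProd X x z w ≥ min (gromovProd X x y w) (gromovProd X y z w) - δ

/-- A subgroup is quasiconvex: it is finitely generated and word lengths distort linearly. -/
def IsQuasiconvex {G : Type u} [Group G] (A : Subgroup G) : Prop :=
  ∃ Y : Set ↥A, IsSymmGen Y ∧ ∃ X : Set G, IsSymmGen X ∧ ∃ c : ℝ, 0 < c ∧
    ∀ a : ↥A, (wordLength Y a : ℝ) ≤ c * (wordLength X (a : G) : ℝ) + c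

/-- Property (Q): every finitely generated subgroup is quasiconvex. -/
def HasPropertyQ (G : Type u) [Group G] : Prop :=
  ∀ H : Subgroup G, H.FG → IsQuasiconvex H

/-- A group is virtually cyclic if it has a cyclic subgroup of finite index. -/
def IsVirtuallyCyclic (C : Type u) [Group C] : Prop :=
  ∃ Z : Subgroup C, IsCyclic ↥Z ∧ Z.FiniteIndex

/-- `G` is the amalgamated free product of its subgroups `A` and `B` along `C`:
`C = A ⊓ B`, `A ⊔ B = ⊤` and `G` has the pushout universal property. -/
structure IsAmalgamatedFreeProduct {G : Type u} [Group G] (A B C : Subgroup G) : Prop where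
  le_left : C ≤ A
  le_right : C ≤ B
  inf_eq : A ⊓ B = C
  sup_eq_top : A ⊔ B = ⊤
  univ : ∀ (K : Type u) [Group K] (f : ↥A →* K) (g : ↥B →* K),
    (∀ (c : G) (hA : c ∈ A) (hB : c ∈ B), f ⟨c, hA⟩ = g ⟨c, hB⟩) →
    ∃ h : G →* K, (∀ a : ↥A, h a = f a) ∧ (∀ b : ↥B, h b = g b)

section Words

variable {G : Type u} [Group G]

/-- A word over the alphabet `X`. -/
def IsWordOver (X : Set G) (l : List G) : Prop := ∀ x ∈ l, x ∈ X

/-- A geodesic word over `X`. -/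
def IsGeodesicWord (X : Set G) (l : List G) : Prop :=
  IsWordOver X l ∧ l.length = wordLength X l.prod

/-- A `lam`-quasigeodesic word over `X`: every subword `v` satisfies
`l(v) ≤ lam * l_X(v̄) + lam`. -/
def IsQuasigeodesicWord (X : Set G) (lam : ℝ) (l : List G) : Prop :=
  IsWordOver X l ∧
    ∀ v : List G, v <:+: l → (v.length : ℝ) ≤ lam * (wordLength X v.prod : ℝ) + lam

/-- `g` is a shortest element of the subset `S` with respect to `wordLength X`. -/
def ShortestIn (X : Set G) (g : G) (S : Set G) : Prop :=
  g ∈ S ∧ ∀ s ∈ S, wordLength X g ≤ wordLength X s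

end Words

/-- `G` together with `ια, ιβ` is the pushout of `ℤ → A, 1 ↦ x` and `ℤ → B, 1 ↦ y`. -/
structure IsAmalgamOverZ {A : Type u} {B : Type v} {G : Type w}
    [Group A] [Group B] [Group G]
    (ια : A →* G) (ιβ : B →* G) (x : A) (y : B) : Prop where
  comm : ια x = ιβ y
  gen : ια.range ⊔ ιβ.range = ⊤
  univ : ∀ (K : Type (max u v w)) [Group K] (f : A →* K) (g : B →* K),
    f x = g y → ∃ h : G →* K, h.comp ια = f ∧ h.comp ιβ = g

section WordLength

variable {G : Type u} [Group G] {X : Set G}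

theorem wordLength_le_of_list (l : List G) (hl : ∀ x ∈ l, x ∈ X) :
    wordLength X l.prod ≤ l.length :=
  Nat.sInf_le ⟨l, rfl, hl, rfl⟩

theorem IsSymmGen.exists_list (hX : IsSymmGen X) (g : G) :
    ∃ l : List G, l.length = wordLength X g ∧ (∀ x ∈ l, x ∈ X) ∧ l.prod = g := by
  have hne : {n : ℕ | ∃ l : List G, l.length = n ∧ (∀ x ∈ l, x ∈ X) ∧ l.prod = g}.Nonempty := by
    have hg : g ∈ (Subgroup.closure X).toSubmonoid := by rw [hX.2.2]; trivial
    rw [Subgroup.closure_toSubmonoid] at hg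
    obtain ⟨l, hl, hp⟩ := Submonoid.exists_list_of_mem_closure hg
    refine ⟨l.length, l, rfl, fun x hx => ?_, hp⟩
    rcases hl x hx with h | h
    · exact h
    · simpa using hX.2.1 _ h
  exact Nat.sInf_mem hne

theorem wordLength_one : wordLength X (1 : G) = 0 :=
  Nat.le_zero.mp (by simpa using wordLength_le_of_list (X := X) ([] : List G) (by simp))

theorem IsSymmGen.wordLength_mul_le (hX : IsSymmGen X) (g h : G) :
    wordLength X (g * h) ≤ wordLength X g + wordLength X h := by
  obtain ⟨l, hl, hlX, rfl⟩ := hX.exists_list g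
  obtain ⟨k, hk, hkX, rfl⟩ := hX.exists_list h
  rw [← hl, ← hk, ← List.prod_append, ← List.length_append]
  refine wordLength_le_of_list _ fun x hx => ?_
  rcases List.mem_append.mp hx with h | h
  exacts [hlX x h, hkX x h]

theorem IsSymmGen.wordLength_inv_le (hX : IsSymmGen X) (g : G) :
    wordLength X g⁻¹ ≤ wordLength X g := by
  obtain ⟨l, hl, hlX, rfl⟩ := hX.exists_list g
  rw [← hl, List.prod_inv_reverse]
  refine (wordLength_le_of_list _ fun x hx => ?_).trans (by simp)
  simp only [List.mem_reverse, List.mem_map] at hx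
  obtain ⟨y, hy, rfl⟩ := hx
  exact hX.2.1 _ (hlX y hy)

theorem IsSymmGen.wordLength_inv (hX : IsSymmGen X) (g : G) :
    wordLength X g⁻¹ = wordLength X g :=
  le_antisymm (hX.wordLength_inv_le g) (by simpa using hX.wordLength_inv_le g⁻¹)

theorem IsSymmGen.finite_wordLength_le (hX : IsSymmGen X) (n : ℕ) :
    {g : G | wordLength X g ≤ n}.Finite := by
  have : Finite X := hX.1
  refine ((List.finite_length_le X n).image fun l => (l.map Subtype.val).prod).subset ?_
  intro g hg
  obtain ⟨l, hl, hlX, rfl⟩ := hX.exists_list g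
  refine ⟨l.attachWith (· ∈ X) hlX, ?_, ?_⟩
  · simpa [hl] using hg
  · simp

/-- A geodesic word can be cut in the middle. -/
theorem IsSymmGen.exists_midpoint (hX : IsSymmGen X) (g : G) :
    ∃ p : G, wordLength X p + wordLength X (p⁻¹ * g) = wordLength X g ∧
      wordLength X g ≤ 2 * wordLength X p + 1 ∧ 2 * wordLength X p ≤ wordLength X g := by
  obtain ⟨l, hl, hlX, rfl⟩ := hX.exists_list g
  set k := l.length / 2 with hk
  have hsplit : l.prod = (l.take k).prod * (l.drop k).prod := by
    rw [← List.prod_append, List.take_append_drop]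
  have h₁ := wordLength_le_of_list (X := X) (l.take k) fun x hx => hlX x (List.mem_of_mem_take hx)
  have h₂ := wordLength_le_of_list (X := X) (l.drop k) fun x hx => hlX x (List.mem_of_mem_drop hx)
  have h₃ := hX.wordLength_mul_le (l.take k).prod (l.drop k).prod
  rw [← hsplit, ← hl] at h₃
  rw [List.length_take] at h₁
  rw [List.length_drop] at h₂
  refine ⟨(l.take k).prod, ?_⟩
  rw [← hl]
  have : (l.take k).prod⁻¹ * l.prod = (l.drop k).prod := by rw [hsplit]; group
  rw [this]
  omega

/-- Word lengths with respect to two finite generating sets are Lipschitz equivalent. -/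
theorem IsSymmGen.exists_wordLength_le_mul (hX : IsSymmGen X) {Y : Set G} (hY : IsSymmGen Y) :
    ∃ L : ℕ, 0 < L ∧ ∀ g : G, wordLength Y g ≤ L * wordLength X g := by
  obtain ⟨L, hL⟩ := (hX.1.image (wordLength Y)).bddAbove
  refine ⟨L + 1, L.succ_pos, fun g => ?_⟩
  obtain ⟨l, hl, hlX, rfl⟩ := hX.exists_list g
  rw [← hl]
  clear hl
  induction l with
  | nil => simp [wordLength_one]
  | cons x l ih =>
    have h₁ := ih fun y hy => hlX y (List.mem_cons_of_mem _ hy)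
    have h₂ : wordLength Y x ≤ L := hL ⟨x, hlX x List.mem_cons_self, rfl⟩
    have h₃ := hY.wordLength_mul_le x l.prod
    rw [List.prod_cons, List.length_cons]
    nlinarith

end WordLength

/-- A proper length function on a group whose associated metric `d x y = ℓ (x⁻¹ * y)` has
coarse midpoints and satisfies the four-point hyperbolicity condition. -/
structure IsHyperbolicLength {G : Type u} [Group G] (ℓ : G → ℝ) (δ : ℝ) : Prop where
  one : ℓ 1 = 0
  nonneg : ∀ g, 0 ≤ ℓ g
  inv : ∀ g, ℓ g⁻¹ = ℓ g
  mul_le : ∀ g h, ℓ (g * h) ≤ ℓ g + ℓ h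
  finite_le : ∀ r, {g | ℓ g ≤ r}.Finite
  midpoint : ∀ g, ∃ p, ℓ p + ℓ (p⁻¹ * g) = ℓ g ∧ ℓ g ≤ 2 * ℓ p + 1 ∧ 2 * ℓ p ≤ ℓ g
  delta_nonneg : 0 ≤ δ
  four_point : ∀ x y z w, ℓ (x⁻¹ * z) + ℓ (y⁻¹ * w) ≤ ℓ (x⁻¹ * y) + ℓ (z⁻¹ * w) + 2 * δ ∨
    ℓ (x⁻¹ * z) + ℓ (y⁻¹ * w) ≤ ℓ (x⁻¹ * w) + ℓ (y⁻¹ * z) + 2 * δ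

theorem IsWordHyperbolic.exists_isHyperbolicLength {G : Type u} [Group G]
    (hG : IsWordHyperbolic G) :
    ∃ X : Set G, IsSymmGen X ∧ ∃ δ : ℝ, IsHyperbolicLength (fun g => (wordLength X g : ℝ)) δ := by
  obtain ⟨X, hX, δ, hδ, h⟩ := hG
  refine ⟨X, hX, δ, ?_⟩
  constructor
  · simp [wordLength_one]
  · intro g; positivity
  · intro g; simp [hX.wordLength_inv]
  · intro g h; exact_mod_cast hX.wordLength_mul_le g h
  · intro r
    refine (hX.finite_wordLength_le ⌊r⌋₊).subset fun g hg => ?_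
    exact Nat.le_floor hg
  · intro g
    obtain ⟨p, h₁, h₂, h₃⟩ := hX.exists_midpoint g
    exact ⟨p, by exact_mod_cast h₁, by exact_mod_cast h₂, by exact_mod_cast h₃⟩
  · exact hδ
  · intro x y z w
    have h₁ := h x y z w
    simp only [gromovProd, wordDist] at h₁
    rcases min_choice
      (((wordLength X (x⁻¹ * w) : ℝ) + wordLength X (y⁻¹ * w) - wordLength X (x⁻¹ * y)) / 2)
      (((wordLength X (y⁻¹ * w) : ℝ) + wordLength X (z⁻¹ * w) - wordLength X (y⁻¹ * z)) / 2)
      with h₂ | h₂ <;> rw [h₂] at h₁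
    · left; linarith
    · right; linarith

namespace IsHyperbolicLength

variable {G : Type u} [Group G] {ℓ : G → ℝ} {δ : ℝ}

theorem dist_comm (H : IsHyperbolicLength ℓ δ) (x y : G) : ℓ (x⁻¹ * y) = ℓ (y⁻¹ * x) := by
  rw [← H.inv (x⁻¹ * y)]; congr 1; group

theorem dist_triangle (H : IsHyperbolicLength ℓ δ) (x y z : G) :
    ℓ (x⁻¹ * z) ≤ ℓ (x⁻¹ * y) + ℓ (y⁻¹ * z) := by
  convert H.mul_le (x⁻¹ * y) (y⁻¹ * z) using 2; group

theorem pow_le (H : IsHyperbolicLength ℓ δ) (g : G) (n : ℕ) : ℓ (g ^ n) ≤ n * ℓ g := by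
  induction n with
  | zero => simp [H.one]
  | succ n ih =>
    have := H.mul_le (g ^ n) g
    rw [pow_succ]; push_cast; linarith

theorem exists_pow_gt (H : IsHyperbolicLength ℓ δ) {a : G} (ha : ¬IsOfFinOrder a) (r : ℝ) :
    ∃ n : ℕ, r < ℓ (a ^ n) := by
  by_contra! hr
  exact Set.infinite_range_of_injective (injective_pow_iff_not_isOfFinOrder.mpr ha)
    ((H.finite_le r).subset (by rintro _ ⟨n, rfl⟩; exact hr n))

/-- If `p` is a midpoint of two points `1, y` at large distance, and `g` commutes with `y` and
displaces `1` only a little, then `g` acts near `p` approximately as a translation. -/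
theorem two_mul_displacement_le (H : IsHyperbolicLength ℓ δ) {g y p : G} {D : ℝ}
    (hgy : Commute g y) (hp : ℓ p + ℓ (p⁻¹ * y) = ℓ y) (hp₁ : ℓ y ≤ 2 * ℓ p + 1)
    (hp₂ : 2 * ℓ p ≤ ℓ y) (hD : ℓ g ≤ D) (hy : 10 * D + 20 * δ + 10 < ℓ y) :
    2 * ℓ (p⁻¹ * g * p) ≤ ℓ (p⁻¹ * g ^ 2 * p) + 14 * δ := by
  have hδ := H.delta_nonneg
  have hg₀ := H.nonneg g
  have e₁ : ℓ ((g * p)⁻¹ * g) = ℓ p := by rw [← H.inv p]; congr 1; group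
  have e₂ : ℓ ((g * p)⁻¹ * (g * y)) = ℓ (p⁻¹ * y) := by congr 1; group
  have e₃ : ℓ (g⁻¹ * (g * y)) = ℓ y := by congr 1; group
  have e₄ : ℓ (y⁻¹ * (g * y)) = ℓ g := by rw [hgy.eq]; congr 1; group
  have e₅ : ℓ (p⁻¹ * (g * p)) = ℓ (p⁻¹ * g * p) := by congr 1; group
  have e₆ : ℓ (p⁻¹ * (g ^ 2 * p)) = ℓ (p⁻¹ * g ^ 2 * p) := by congr 1; group
  have e₇ : ℓ ((g * p)⁻¹ * g⁻¹) = ℓ (g ^ 2 * p) := by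
    rw [← H.inv (g ^ 2 * p)]; congr 1; rw [pow_two]; group
  have e₈ : ℓ (p⁻¹ * g⁻¹) = ℓ (g * p) := by rw [← H.inv (g * p)]; congr 1; group
  have o : ∀ x, ℓ ((1 : G)⁻¹ * x) = ℓ x := fun x => by simp
  have o' : ∀ x : G, ℓ (x⁻¹ * 1) = ℓ x := fun x => by simp [H.inv]
  have t₁ := H.mul_le g p
  have t₂ : ℓ p ≤ ℓ g + ℓ (g * p) := by
    simpa [H.inv] using H.mul_le g⁻¹ (g * p)
  have t₃ := H.dist_triangle (g * p) (g * y) y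
  rw [H.dist_comm (g * y) y] at t₃
  have t₄ := H.dist_triangle (g * p) y (g * y)
  have t₅ := H.dist_triangle g y (g * y)
  have t₆ := H.dist_triangle g (g * y) y
  rw [H.dist_comm (g * y) y] at t₆
  -- `g * p` lies coarsely on a geodesic from `1` to `y`
  have s₁ : ℓ (g * p) + ℓ (g⁻¹ * y) ≤ ℓ p + ℓ y + 2 * δ := by
    have := H.four_point (g * p) g 1 y
    rw [e₁, o, o', o'] at this
    rcases this with h | h
    · exact h
    · linarith
  have s₂ : ℓ ((g * p)⁻¹ * y) + ℓ y ≤ ℓ (p⁻¹ * y) + ℓ (g⁻¹ * y) + 2 * δ := by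
    have := H.four_point (g * p) (g * y) y g
    rw [e₁, e₂, H.dist_comm (g * y) g, e₃, H.dist_comm (g * y) y, e₄, H.dist_comm y g] at this
    rcases this with h | h
    · exact h
    · linarith
  have s₃ : ℓ (p⁻¹ * g * p) ≤ |ℓ (g * p) - ℓ p| + 6 * δ := by
    have h₁ := le_abs_self (ℓ (g * p) - ℓ p)
    have h₂ := neg_abs_le (ℓ (g * p) - ℓ p)
    have := H.four_point p 1 (g * p) y
    rw [o, o, o', e₅] at this
    rcases this with h | h <;> linarith
  have s₄ : |ℓ (g * p) - ℓ p| ≤ ℓ g := abs_le.mpr ⟨by linarith, by linarith⟩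
  have t₇ : ℓ (g * p) ≤ ℓ g + ℓ (g ^ 2 * p) := by
    have := H.mul_le g⁻¹ (g ^ 2 * p)
    rwa [H.inv, show g⁻¹ * (g ^ 2 * p) = g * p by rw [pow_two]; group] at this
  -- the displacement of `p` measured from `1` is approximately additive
  have s₅ : ℓ (g ^ 2 * p) + ℓ p ≤ 2 * ℓ (g * p) + 2 * δ := by
    have := H.four_point (g * p) p g⁻¹ 1
    rw [e₇, o', o', H.dist_comm (g * p) p, e₅, o', H.inv, e₈] at this
    rcases this with h | h <;> linarith
  have s₆ : 2 * ℓ (g * p) ≤ ℓ (g ^ 2 * p) + ℓ p + 2 * δ := by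
    have := H.four_point (g * p) p 1 g⁻¹
    rw [e₇, o, o', o', H.dist_comm (g * p) p, e₅, H.inv, e₈] at this
    rcases this with h | h <;> linarith
  have t₈ := H.dist_triangle 1 p (g ^ 2 * p)
  have t₉ := H.dist_triangle 1 (g ^ 2 * p) p
  rw [o, o, e₆] at t₈
  rw [o, o, H.dist_comm (g ^ 2 * p) p, e₆] at t₉
  rcases abs_cases (ℓ (g * p) - ℓ p) with ⟨h, -⟩ | ⟨h, -⟩ <;> rw [h] at s₃ <;> linarith

/-- Some power of an element of infinite order has a conjugate that is long and almost
doubles its length under squaring. -/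
theorem exists_conj_pow_almost_doubling (H : IsHyperbolicLength ℓ δ) {a : G}
    (ha : ¬IsOfFinOrder a) :
    ∃ k : ℕ, 0 < k ∧ ∃ p : G, 100 * δ + 1 < ℓ (p⁻¹ * a ^ k * p) ∧
      2 * ℓ (p⁻¹ * a ^ k * p) ≤ ℓ (p⁻¹ * (a ^ k) ^ 2 * p) + 14 * δ := by
  have hδ := H.delta_nonneg
  set S := (H.finite_le (100 * δ + 1)).toFinset with hS
  set N := S.card
  obtain ⟨M, hM⟩ := H.exists_pow_gt ha (10 * (N * ℓ a) + 20 * δ + 10)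
  obtain ⟨p, hp, hp₁, hp₂⟩ := H.midpoint (a ^ M)
  obtain ⟨k, hk, hkN, hlong⟩ : ∃ k : ℕ, 0 < k ∧ k ≤ N ∧ 100 * δ + 1 < ℓ (p⁻¹ * a ^ k * p) := by
    by_contra! hshort
    have hmaps : ∀ i ∈ Finset.range (N + 1), p⁻¹ * a ^ i * p ∈ S := by
      intro i hi
      rw [hS, Set.Finite.mem_toFinset]
      rcases Nat.eq_zero_or_pos i with rfl | hpos
      · simp [H.one]; linarith
      · exact hshort i hpos (Nat.lt_succ_iff.mp (Finset.mem_range.mp hi))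
    obtain ⟨i, -, j, -, hij, h⟩ := Finset.exists_ne_map_eq_of_card_lt_of_maps_to
      (by simp [N]) hmaps
    refine hij (injective_pow_iff_not_isOfFinOrder.mpr ha ?_)
    simpa using h
  refine ⟨k, hk, p, hlong, ?_⟩
  refine H.two_mul_displacement_le (Commute.pow_pow_self a k M) hp hp₁ hp₂ ?_ hM
  refine (H.pow_le a k).trans ?_
  have : (k : ℝ) ≤ N := by exact_mod_cast hkN
  exact mul_le_mul_of_nonneg_right this (H.nonneg a)

theorem pow_add_le_pow_succ (H : IsHyperbolicLength ℓ δ) {g : G} (hg : 100 * δ + 1 < ℓ g)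
    (hg₂ : 2 * ℓ g ≤ ℓ (g ^ 2) + 14 * δ) (n : ℕ) :
    ℓ (g ^ n) + ℓ g ≤ ℓ (g ^ (n + 1)) + 16 * δ := by
  have hδ := H.delta_nonneg
  induction n with
  | zero => simp [H.one]; linarith
  | succ n ih =>
    have := H.four_point 1 g (g ^ 2) (g ^ (n + 2))
    rw [show g⁻¹ * g ^ (n + 2) = g ^ (n + 1) by rw [pow_succ' g (n + 1)]; group,
      show (g ^ 2)⁻¹ * g ^ (n + 2) = g ^ n by rw [add_comm, pow_add]; group,
      show g⁻¹ * g ^ 2 = g by rw [pow_two]; group] at this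
    simp only [inv_one, one_mul] at this
    rw [show n + 1 + 1 = n + 2 from rfl]
    rcases this with h | h <;> linarith

theorem pow_add_pow_le (H : IsHyperbolicLength ℓ δ) {g : G} (hg : 100 * δ + 1 < ℓ g)
    (hg₂ : 2 * ℓ g ≤ ℓ (g ^ 2) + 14 * δ) (n m : ℕ) :
    ℓ (g ^ n) + ℓ (g ^ m) ≤ ℓ (g ^ (n + m)) + 18 * δ := by
  have hδ := H.delta_nonneg
  cases m with
  | zero => simp [H.one]; linarith
  | succ m =>
    have h₁ := H.pow_add_le_pow_succ hg hg₂ n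
    have h₂ := H.pow_add_le_pow_succ hg hg₂ m
    have := H.four_point 1 (g ^ n) (g ^ (n + 1)) (g ^ (n + (m + 1)))
    rw [show (g ^ n)⁻¹ * g ^ (n + (m + 1)) = g ^ (m + 1) by rw [pow_add]; group,
      show (g ^ (n + 1))⁻¹ * g ^ (n + (m + 1)) = g ^ m by
        rw [show n + (m + 1) = n + 1 + m by ring, pow_add _ (n + 1)]; group,
      show (g ^ n)⁻¹ * g ^ (n + 1) = g by rw [pow_succ]; group] at this
    simp only [inv_one, one_mul] at this
    rcases this with h | h <;> linarith

/-- The powers of some power of an element of infinite order are coarsely geodesic. -/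
theorem exists_pow_coarsely_additive (H : IsHyperbolicLength ℓ δ) {a : G}
    (ha : ¬IsOfFinOrder a) :
    ∃ k : ℕ, 0 < k ∧ ∃ C : ℝ, ∀ n m : ℕ,
      ℓ ((a ^ k) ^ n) + ℓ ((a ^ k) ^ m) ≤ ℓ ((a ^ k) ^ (n + m)) + C := by
  obtain ⟨k, hk, p, hp, hp₂⟩ := H.exists_conj_pow_almost_doubling ha
  have hconj : ∀ n, (p⁻¹ * a ^ k * p) ^ n = p⁻¹ * (a ^ k) ^ n * p := fun n => by
    simpa using conj_pow (a := p⁻¹) (b := a ^ k) (i := n)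
  rw [← hconj] at hp₂
  refine ⟨k, hk, 18 * δ + 6 * ℓ p, fun n m => ?_⟩
  have h := H.pow_add_pow_le hp hp₂ n m
  simp only [hconj] at h
  have lower : ∀ x, ℓ x ≤ ℓ (p⁻¹ * x * p) + 2 * ℓ p := fun x => by
    have h₁ := H.mul_le (p * (p⁻¹ * x * p)) p⁻¹
    have h₂ := H.mul_le p (p⁻¹ * x * p)
    rw [show p * (p⁻¹ * x * p) * p⁻¹ = x by group, H.inv] at h₁
    linarith
  have upper : ∀ x, ℓ (p⁻¹ * x * p) ≤ ℓ x + 2 * ℓ p := fun x => by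
    have h₁ := H.mul_le (p⁻¹ * x) p
    have h₂ := H.mul_le p⁻¹ x
    rw [H.inv] at h₂
    linarith
  linarith [lower ((a ^ k) ^ n), lower ((a ^ k) ^ m), upper ((a ^ k) ^ (n + m))]

theorem exists_pow_near (H : IsHyperbolicLength ℓ δ) (b : G) {r : ℝ} (hr : 0 ≤ r) {n : ℕ}
    (hn : r ≤ ℓ (b ^ n)) : ∃ j ≤ n, r ≤ ℓ (b ^ j) ∧ ℓ (b ^ j) ≤ r + ℓ b := by
  induction n with
  | zero =>
    refine ⟨0, le_rfl, hn, ?_⟩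
    have := H.nonneg b
    simp [H.one]; linarith
  | succ n ih =>
    by_cases h : r ≤ ℓ (b ^ n)
    · obtain ⟨j, hj, hj'⟩ := ih h
      exact ⟨j, hj.trans n.le_succ, hj'⟩
    · refine ⟨n + 1, le_rfl, hn, ?_⟩
      have := H.mul_le (b ^ n) b
      rw [pow_succ]; linarith

/-- Two coarsely geodesic rays of powers generating subgroups with trivial intersection
diverge. -/
theorem exists_pow_le_dist_pow (H : IsHyperbolicLength ℓ δ) {a b : G} {C : ℝ}
    (hA : ∀ n m : ℕ, ℓ (a ^ n) + ℓ (a ^ m) ≤ ℓ (a ^ (n + m)) + C)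
    (hB : ∀ n m : ℕ, ℓ (b ^ n) + ℓ (b ^ m) ≤ ℓ (b ^ (n + m)) + C)
    (hab : ∀ m n : ℤ, a ^ m = b ^ n → m = 0) :
    ∃ M : ℝ, ∀ m n : ℕ, ℓ (a ^ m) ≤ ℓ ((a ^ m)⁻¹ * b ^ n) + M := by
  have hδ := H.delta_nonneg
  by_contra! hM
  have hC : 0 ≤ C := by simpa [H.one] using hA 0 0
  -- initial segments have almost maximal Gromov product with the endpoint
  have seg : ∀ {c : G}, (∀ n m : ℕ, ℓ (c ^ n) + ℓ (c ^ m) ≤ ℓ (c ^ (n + m)) + C) →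
      ∀ {i m : ℕ}, i ≤ m → ℓ (c ^ i) + ℓ ((c ^ i)⁻¹ * c ^ m) ≤ ℓ (c ^ m) + C := by
    intro c hc i m him
    obtain ⟨t, rfl⟩ := Nat.exists_eq_add_of_le him
    rw [show (c ^ i)⁻¹ * c ^ (i + t) = c ^ t by rw [pow_add]; group]
    exact hc i t
  have near : ∀ i : ℕ, ∃ j : ℕ, ℓ ((a ^ i)⁻¹ * b ^ j) ≤ ℓ b + C + 4 * δ := by
    intro i
    obtain ⟨m, n, hmn⟩ := hM (2 * (i * ℓ a + ℓ b + C + 4 * δ))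
    have hi := H.pow_le a i
    have h₀ := H.nonneg (a ^ i)
    have hb₀ := H.nonneg b
    have hdist := H.nonneg ((a ^ m)⁻¹ * b ^ n)
    have him : i ≤ m := by
      by_contra! hlt
      have h₁ := H.pow_le a m
      have h₂ : (m : ℝ) * ℓ a ≤ i * ℓ a :=
        mul_le_mul_of_nonneg_right (by exact_mod_cast hlt.le) (H.nonneg a)
      linarith [H.nonneg (a ^ m)]
    have htri : ℓ (a ^ m) ≤ ℓ (b ^ n) + ℓ ((a ^ m)⁻¹ * b ^ n) := by
      simpa [H.dist_comm (b ^ n) (a ^ m)] using H.dist_triangle 1 (b ^ n) (a ^ m)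
    obtain ⟨j, hjn, hj₁, hj₂⟩ := H.exists_pow_near b h₀ (n := n) (by linarith)
    refine ⟨j, ?_⟩
    have ha := seg hA him
    have hb := seg hB hjn
    have q₁ := H.four_point (a ^ i) (a ^ m) (b ^ n) 1
    have q₂ := H.four_point (a ^ i) (b ^ n) (b ^ j) 1
    simp only [mul_one, H.inv] at q₁ q₂
    rw [H.dist_comm (b ^ n) (b ^ j)] at q₂
    rcases q₁ with q₁ | q₁ <;> rcases q₂ with q₂ | q₂ <;> linarith
  choose j hj using near
  have : Finite {g | ℓ g ≤ ℓ b + C + 4 * δ} := H.finite_le _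
  obtain ⟨s, t, hst, h⟩ := Finite.exists_ne_map_eq_of_infinite
    fun i : ℕ => (⟨(a ^ i)⁻¹ * b ^ j i, hj i⟩ : {g | ℓ g ≤ ℓ b + C + 4 * δ})
  have h' : (a ^ s)⁻¹ * b ^ j s = (a ^ t)⁻¹ * b ^ j t := congrArg Subtype.val h
  have key : a ^ ((t : ℤ) - s) = b ^ ((j t : ℤ) - j s) := by
    rw [zpow_sub, zpow_sub]
    simp only [zpow_natCast]
    calc a ^ t * (a ^ s)⁻¹ = a ^ t * ((a ^ s)⁻¹ * b ^ j s) * (b ^ j s)⁻¹ := by group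
      _ = b ^ j t * (b ^ j s)⁻¹ := by rw [h']; group
  have := hab _ _ key
  omega

theorem exists_zpow_le_mul_zpow (H : IsHyperbolicLength ℓ δ) {a b : G} {C : ℝ}
    (hA : ∀ n m : ℕ, ℓ (a ^ n) + ℓ (a ^ m) ≤ ℓ (a ^ (n + m)) + C)
    (hB : ∀ n m : ℕ, ℓ (b ^ n) + ℓ (b ^ m) ≤ ℓ (b ^ (n + m)) + C)
    (hab : ∀ m n : ℤ, a ^ m = b ^ n → m = 0) :
    ∃ M : ℝ, ∀ m n : ℤ, ℓ (a ^ m) ≤ ℓ (a ^ m * b ^ n) + M := by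
  have hA' : ∀ n m : ℕ, ℓ (a⁻¹ ^ n) + ℓ (a⁻¹ ^ m) ≤ ℓ (a⁻¹ ^ (n + m)) + C := by
    simpa only [inv_pow, H.inv] using hA
  have hB' : ∀ n m : ℕ, ℓ (b⁻¹ ^ n) + ℓ (b⁻¹ ^ m) ≤ ℓ (b⁻¹ ^ (n + m)) + C := by
    simpa only [inv_pow, H.inv] using hB
  have h₁ : ∀ m n : ℤ, a⁻¹ ^ m = b ^ n → m = 0 := fun m n h => by
    simpa using hab (-m) n (by simpa using h)
  have h₂ : ∀ m n : ℤ, a ^ m = b⁻¹ ^ n → m = 0 := fun m n h => hab m (-n) (by simpa using h)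
  have h₃ : ∀ m n : ℤ, a⁻¹ ^ m = b⁻¹ ^ n → m = 0 := fun m n h => h₁ m (-n) (by simpa using h)
  obtain ⟨M₀, hM₀⟩ := H.exists_pow_le_dist_pow hA hB hab
  obtain ⟨M₁, hM₁⟩ := H.exists_pow_le_dist_pow hA' hB h₁
  obtain ⟨M₂, hM₂⟩ := H.exists_pow_le_dist_pow hA hB' h₂
  obtain ⟨M₃, hM₃⟩ := H.exists_pow_le_dist_pow hA' hB' h₃
  simp only [inv_pow, inv_inv, H.inv] at hM₁ hM₂ hM₃
  refine ⟨max (max M₀ M₁) (max M₂ M₃), fun m n => ?_⟩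
  have l₀ : M₀ ≤ max (max M₀ M₁) (max M₂ M₃) := by simp
  have l₁ : M₁ ≤ max (max M₀ M₁) (max M₂ M₃) := by simp
  have l₂ : M₂ ≤ max (max M₀ M₁) (max M₂ M₃) := by simp
  have l₃ : M₃ ≤ max (max M₀ M₁) (max M₂ M₃) := by simp
  obtain ⟨m, rfl | rfl⟩ := m.eq_nat_or_neg <;> obtain ⟨n, rfl | rfl⟩ := n.eq_nat_or_neg <;>
    simp only [zpow_neg, zpow_natCast, H.inv]
  · linarith [hM₁ m n]
  · linarith [hM₃ m n]
  · linarith [hM₀ m n]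
  · linarith [hM₂ m n]

end IsHyperbolicLength

/-- A virtually cyclic subgroup is at bounded distance from the powers of `a ^ k`, for a fixed
`a` and any `k > 0`. -/
theorem IsVirtuallyCyclic.exists_mul_zpow {G : Type u} [Group G] {ℓ : G → ℝ} {δ : ℝ}
    (H : IsHyperbolicLength ℓ δ) {C : Subgroup G} (hC : IsVirtuallyCyclic C) :
    ∃ a ∈ C, ∀ k : ℕ, 0 < k → ∃ D : ℝ, ∀ c ∈ C, ∃ (t : G) (m : ℤ),
      c = t * (a ^ k) ^ m ∧ ℓ t ≤ D := by
  obtain ⟨Z, hZ, hfin⟩ := hC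
  obtain ⟨z, hz⟩ := hZ.exists_generator
  refine ⟨(z : C), (z : C).2, fun k hk => ?_⟩
  have : Finite (C ⧸ Z) := Subgroup.finite_quotient_of_finiteIndex
  obtain ⟨E, hE⟩ := (Set.finite_range fun q : C ⧸ Z => ℓ (q.out : C)).bddAbove
  refine ⟨E + k * ℓ (z : C), fun c hc => ?_⟩
  set q : C ⧸ Z := ((⟨c, hc⟩ : C) : C ⧸ Z)
  have hq : (q.out)⁻¹ * ⟨c, hc⟩ ∈ Z := QuotientGroup.eq.mp (Quotient.out_eq' q)
  obtain ⟨n, hn⟩ := hz ⟨_, hq⟩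
  have hn' : (((z : C) : G)) ^ n = ((q.out : C) : G)⁻¹ * c := by
    simpa using congrArg (fun x : Z => ((x : C) : G)) hn
  have hk' : (k : ℤ) ≠ 0 := by positivity
  obtain ⟨r, hr⟩ := Int.eq_ofNat_of_zero_le (Int.emod_nonneg n hk')
  have hrk : r ≤ k := by have := Int.emod_lt_of_pos n (b := k) (by positivity); omega
  refine ⟨(q.out : C) * ((z : C) : G) ^ r, n / k, ?_, ?_⟩
  · rw [mul_assoc, ← zpow_natCast _ r, ← zpow_natCast _ k, ← zpow_mul, ← zpow_add, ← hr,
      Int.emod_add_mul_ediv, hn']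
    group
  · have h₁ := H.mul_le (q.out : C) (((z : C) : G) ^ r)
    have h₂ := H.pow_le ((z : C) : G) r
    have h₃ : ℓ (q.out : C) ≤ E := hE ⟨q, rfl⟩
    have h₄ : (r : ℝ) * ℓ (z : C) ≤ k * ℓ (z : C) :=
      mul_le_mul_of_nonneg_right (by exact_mod_cast hrk) (H.nonneg _)
    linarith

/-- In a hyperbolic group, multiplying an element of `C₁` by an element of `C₂` shortens it by a
bounded amount only, if `C₁` and `C₂` are virtually cyclic with finite intersection. -/
theorem IsHyperbolicLength.exists_le_mul {G : Type u} [Group G] {ℓ : G → ℝ} {δ : ℝ}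
    (H : IsHyperbolicLength ℓ δ) {C₁ C₂ : Subgroup G}
    (hvc₁ : IsVirtuallyCyclic C₁) (hvc₂ : IsVirtuallyCyclic C₂)
    (hfin : ((C₁ ⊓ C₂ : Subgroup G) : Set G).Finite) :
    ∃ M : ℝ, ∀ c₁ ∈ C₁, ∀ c₂ ∈ C₂, ℓ c₁ ≤ ℓ (c₁ * c₂) + M := by
  obtain ⟨a, haC, ha⟩ := hvc₁.exists_mul_zpow H
  obtain ⟨b, hbC, hb⟩ := hvc₂.exists_mul_zpow H
  by_cases hao : IsOfFinOrder a
  · obtain ⟨D, hD⟩ := ha _ hao.orderOf_pos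
    refine ⟨D, fun c₁ hc₁ c₂ _ => ?_⟩
    obtain ⟨t, m, rfl, ht⟩ := hD c₁ hc₁
    simp only [pow_orderOf_eq_one, one_zpow, mul_one]
    linarith [H.nonneg (t * c₂)]
  by_cases hbo : IsOfFinOrder b
  · obtain ⟨D, hD⟩ := hb _ hbo.orderOf_pos
    refine ⟨D, fun c₁ _ c₂ hc₂ => ?_⟩
    obtain ⟨t, m, rfl, ht⟩ := hD c₂ hc₂
    simp only [pow_orderOf_eq_one, one_zpow, mul_one]
    have := H.mul_le (c₁ * t) t⁻¹
    rw [mul_inv_cancel_right, H.inv] at this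
    linarith
  obtain ⟨k, hk, A, hA⟩ := H.exists_pow_coarsely_additive hao
  obtain ⟨l, hl, B, hB⟩ := H.exists_pow_coarsely_additive hbo
  have hab : ∀ m n : ℤ, (a ^ k) ^ m = (b ^ l) ^ n → m = 0 := by
    intro m n hmn
    have hmem : (a ^ k) ^ m ∈ C₁ ⊓ C₂ := by
      refine ⟨C₁.zpow_mem (C₁.pow_mem haC k) m, ?_⟩
      rw [hmn]
      exact C₂.zpow_mem (C₂.pow_mem hbC l) n
    have : Finite (C₁ ⊓ C₂ : Subgroup G) := hfin
    have hord : IsOfFinOrder ((a ^ k) ^ m) :=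
      (C₁ ⊓ C₂).subtype.isOfFinOrder
        (isOfFinOrder_of_finite (⟨_, hmem⟩ : (C₁ ⊓ C₂ : Subgroup G)))
    by_contra hm
    obtain ⟨r, hr, h⟩ := isOfFinOrder_iff_zpow_eq_one.mp hord
    rw [← zpow_natCast, ← zpow_mul, ← zpow_mul] at h
    exact hao (isOfFinOrder_iff_zpow_eq_one.mpr ⟨k * (m * r), by positivity, h⟩)
  obtain ⟨M, hM⟩ := H.exists_zpow_le_mul_zpow (C := max A B)
    (fun n m => (hA n m).trans (by gcongr; exact le_max_left _ _))
    (fun n m => (hB n m).trans (by gcongr; exact le_max_right _ _)) hab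
  obtain ⟨D, hD⟩ := ha k hk
  obtain ⟨E, hE⟩ := hb l hl
  refine ⟨2 * D + E + M, fun c₁ hc₁ c₂ hc₂ => ?_⟩
  obtain ⟨t, m, rfl, ht⟩ := hD c₁ hc₁
  obtain ⟨s, n, hs, hsE⟩ := hE c₂⁻¹ (C₂.inv_mem hc₂)
  obtain rfl : c₂ = (b ^ l) ^ (-n) * s⁻¹ := by
    rw [← inv_inv c₂, hs, mul_inv_rev, zpow_neg]
  have h₁ := H.mul_le t ((a ^ k) ^ m)
  have h₂ := hM m (-n)
  set w := t * (a ^ k) ^ m * ((b ^ l) ^ (-n) * s⁻¹) with hw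
  have h₃ := H.mul_le (t⁻¹ * w) s
  have h₄ := H.mul_le t⁻¹ w
  rw [show t⁻¹ * w * s = (a ^ k) ^ m * (b ^ l) ^ (-n) by rw [hw]; group] at h₃
  rw [H.inv] at h₄
  linarith

/-- **Lemma 2.2(6).** For virtually cyclic subgroups with finite intersection, the shortest
element of the coset `c₁C₂` has length at least `l(c₁)/K₃ - K₃`. -/
theorem shortest_coset_rep_length_lower_bound {G : Type u} [Group G]
    (hG : IsWordHyperbolic G) (X : Set G) (hX : IsSymmGen X)
    (C₁ C₂ : Subgroup G)
    (hvc₁ : IsVirtuallyCyclic ↥C₁) (hvc₂ : IsVirtuallyCyclic ↥C₂)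
    (hfin : ((C₁ ⊓ C₂ : Subgroup G) : Set G).Finite) :
    ∃ K₃ : ℝ, 0 < K₃ ∧
      ∀ c₁ ∈ C₁, ∀ u : G,
        ShortestIn X u {x | ∃ c ∈ C₂, x = c₁ * c} →
        (wordLength X u : ℝ) ≥ (wordLength X c₁ : ℝ) / K₃ - K₃ := by
  obtain ⟨Y, hY, δ, H⟩ := hG.exists_isHyperbolicLength
  obtain ⟨M, hM⟩ := H.exists_le_mul hvc₁ hvc₂ hfin
  obtain ⟨L, hL, hXY⟩ := hX.exists_wordLength_le_mul hY
  obtain ⟨L', hL', hYX⟩ := hY.exists_wordLength_le_mul hX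
  have hL₁ : (1 : ℝ) ≤ L := by exact_mod_cast hL
  have hL₁' : (1 : ℝ) ≤ L' := by exact_mod_cast hL'
  have hK : 0 < (L' : ℝ) * L + |M| := by positivity
  refine ⟨L' * L + |M|, hK, ?_⟩
  rintro c₁ hc₁ u ⟨⟨c, hc, rfl⟩, -⟩
  have h₁ : (wordLength Y c₁ : ℝ) ≤ wordLength Y (c₁ * c) + M := hM c₁ hc₁ c hc
  have h₂ : (wordLength Y (c₁ * c) : ℝ) ≤ L * wordLength X (c₁ * c) := by
    exact_mod_cast hXY (c₁ * c)
  have h₃ : (wordLength X c₁ : ℝ) ≤ L' * wordLength Y c₁ := by exact_mod_cast hYX c₁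
  rw [ge_iff_le, sub_le_iff_le_add, div_le_iff₀ hK]
  have hM' := le_abs_self M
  have hM₀ := abs_nonneg M
  have hu : (0 : ℝ) ≤ wordLength X (c₁ * c) := by positivity
  calc (wordLength X c₁ : ℝ) ≤ L' * (L * wordLength X (c₁ * c) + |M|) :=
        h₃.trans (by gcongr; linarith)
    _ = L' * L * wordLength X (c₁ * c) + L' * 1 * |M| := by ring
    _ ≤ L' * L * wordLength X (c₁ * c) + L' * L * |M| := by gcongr
    _ ≤ (wordLength X (c₁ * c) + (L' * L + |M|)) * (L' * L + |M|) := by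
        have : (0 : ℝ) ≤ L' * L := by positivity
        nlinarith [mul_nonneg hu hM₀, mul_nonneg this hM₀, mul_nonneg this this,
          mul_nonneg hM₀ hM₀]
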